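/- Let A, B ∈ M_n(ℂ) be self-adjoint matrices with A majorized by B (i.e., there is a doubly stochastic matrix X with X·λ(B) = λ(A), where λ(A), λ(B) are eigenvalue vectors). Then there exist unitaries U₁, …, U_{2^{n−1}} ∈ M_n(ℂ) such that A = ∑_{i=1}^{2^{n−1}} (1/2^{n−1}) U_i* B U_i. -/

import Mathlib

open Matrix

def IsDoublyStochastic {n : ℕ} (X : Matrix (Fin n) (Fin n) ℝ) : Prop :=
  (∀ i j, 0 ≤ X i j) ∧ (∀ i, ∑ j, X i j = 1) ∧ (∀ j, ∑ i, X i j = 1)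

/-- `A` is the average of `2 ^ k` unitary conjugates of `B`. -/
def IsUnitaryAverage {ι : Type*} [Fintype ι] [DecidableEq ι] (k : ℕ) (A B : Matrix ι ι ℂ) : Prop :=
  ∃ U : Fin (2 ^ k) → unitaryGroup ι ℂ,
    A = ∑ i, ((1 : ℂ) / 2 ^ k) • ((U i : Matrix ι ι ℂ)ᴴ * B * (U i : Matrix ι ι ℂ))

namespace IsUnitaryAverage

variable {ι : Type*} [Fintype ι] [DecidableEq ι] {A B C : Matrix ι ι ℂ}

theorem of_card_eq {κ : Type*} [Fintype κ] {k : ℕ} (hκ : Fintype.card κ = 2 ^ k)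
    (U : κ → unitaryGroup ι ℂ)
    (h : A = ∑ i, ((1 : ℂ) / 2 ^ k) • ((U i : Matrix ι ι ℂ)ᴴ * B * (U i : Matrix ι ι ℂ))) :
    IsUnitaryAverage k A B := by
  refine ⟨U ∘ (Fintype.equivFinOfCardEq hκ).symm, ?_⟩
  rw [h, ← (Fintype.equivFinOfCardEq hκ).symm.sum_comp]
  rfl

theorem conj {U : Matrix ι ι ℂ} (hU : U ∈ unitaryGroup ι ℂ) :
    IsUnitaryAverage 0 (Uᴴ * B * U) B :=
  of_card_eq (κ := Unit) (by simp) (fun _ => ⟨U, hU⟩) (by simp)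

theorem refl_one (B : Matrix ι ι ℂ) : IsUnitaryAverage 1 B B :=
  of_card_eq (κ := Bool) (by simp) (fun _ => 1) (by
    simp only [Fintype.sum_bool, OneMemClass.coe_one, conjTranspose_one, one_mul, mul_one,
      ← add_smul]
    norm_num)

theorem trans {k l : ℕ} (h₁ : IsUnitaryAverage k A B) (h₂ : IsUnitaryAverage l B C) :
    IsUnitaryAverage (k + l) A C := by
  obtain ⟨U, rfl⟩ := h₁
  obtain ⟨V, rfl⟩ := h₂
  refine of_card_eq (κ := Fin (2 ^ k) × Fin (2 ^ l)) (by simp [pow_add])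
    (fun p => V p.2 * U p.1) ?_
  rw [Fintype.sum_prod_type]
  refine Finset.sum_congr rfl fun i _ => ?_
  rw [Finset.mul_sum, Finset.sum_mul, Finset.smul_sum]
  refine Finset.sum_congr rfl fun j _ => ?_
  rw [mul_smul_comm, smul_mul_assoc, smul_smul, pow_add, one_div_mul_one_div]
  simp only [Submonoid.coe_mul, conjTranspose_mul, Matrix.mul_assoc]

/-- Averaging over the unitaries `c ± i s P`, where `P` is a self-adjoint unitary. -/
theorem smul_add_smul_conj {P : Matrix ι ι ℂ} (hP : Pᴴ = P) (hPP : P * P = 1) {c s : ℝ}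
    (hcs : c ^ 2 + s ^ 2 = 1) :
    IsUnitaryAverage 1 (((c ^ 2 : ℝ) : ℂ) • B + ((s ^ 2 : ℝ) : ℂ) • (P * B * P)) B := by
  have hcs' : (c : ℂ) * c + s * s = 1 := by
    rw [← sq, ← sq]; exact_mod_cast hcs
  have hstar (z : ℝ) : ((c : ℂ) • (1 : Matrix ι ι ℂ) + (z * Complex.I) • P)ᴴ =
      (c : ℂ) • (1 : Matrix ι ι ℂ) - (z * Complex.I) • P := by
    simp [hP, sub_eq_add_neg]
  have hmem (z : ℝ) (hz : z * z = s * s) :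
      (c : ℂ) • (1 : Matrix ι ι ℂ) + (z * Complex.I) • P ∈ unitaryGroup ι ℂ := by
    have hz' : (z : ℂ) * z = s * s := by exact_mod_cast hz
    rw [mem_unitaryGroup_iff', star_eq_conjTranspose, hstar]
    simp only [sub_mul, mul_add, smul_mul_assoc, mul_smul_comm, hPP, one_mul, mul_one]
    have e : (z : ℂ) * Complex.I * (z * Complex.I) = -(s * s) := by
      rw [mul_mul_mul_comm, Complex.I_mul_I, hz']; ring
    rw [smul_sub, smul_sub, smul_smul, smul_smul, smul_smul, smul_smul, e,
      mul_comm ((z : ℂ) * Complex.I) c]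
    rw [show ((c : ℂ) * c) • (1 : Matrix ι ι ℂ) - ((c : ℂ) * (z * Complex.I)) • P +
      (((c : ℂ) * (z * Complex.I)) • P - (-((s : ℂ) * s)) • (1 : Matrix ι ι ℂ)) =
      ((c : ℂ) * c + s * s) • (1 : Matrix ι ι ℂ) by module, hcs', one_smul]
  refine of_card_eq (κ := Bool) (by simp)
    (fun x => if x then ⟨_, hmem s rfl⟩ else ⟨_, hmem (-s) (by ring)⟩) ?_
  simp only [Fintype.sum_bool, if_true, Bool.false_eq_true, if_false, hstar]
  simp only [sub_mul, mul_add, smul_mul_assoc, mul_smul_comm, one_mul, mul_one]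
  push_cast
  match_scalars <;> ring_nf
  simp

end IsUnitaryAverage

section Diagonal

variable {ι : Type*} [DecidableEq ι]

theorem conjTranspose_permMatrix_swap (j k : ι) :
    ((Equiv.swap j k).permMatrix ℂ)ᴴ = (Equiv.swap j k).permMatrix ℂ := by
  rw [conjTranspose_permMatrix, Equiv.swap_inv]

variable [Fintype ι]

theorem permMatrix_swap_mul_self (j k : ι) :
    (Equiv.swap j k).permMatrix ℂ * (Equiv.swap j k).permMatrix ℂ = 1 := by
  rw [← permMatrix_mul, Equiv.swap_mul_self, permMatrix_one]

theorem permMatrix_swap_mul_diagonal_mul (j k : ι) (d : ι → ℂ) :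
    (Equiv.swap j k).permMatrix ℂ * diagonal d * (Equiv.swap j k).permMatrix ℂ =
      diagonal (d ∘ Equiv.swap j k) := by
  have h : (Equiv.swap j k).permMatrix ℂ * diagonal d =
      diagonal (d ∘ Equiv.swap j k) * (Equiv.swap j k).permMatrix ℂ := by
    ext x y
    simp only [mul_diagonal, diagonal_mul, Equiv.Perm.permMatrix, PEquiv.toMatrix_apply,
      Equiv.toPEquiv_apply, Option.mem_some_iff, Function.comp_apply]
    split_ifs with hxy
    · simp [hxy]
    · simp
  rw [h, mul_assoc, permMatrix_swap_mul_self, mul_one]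

theorem isUnitaryAverage_diagonal_swap (j k : ι) (b : ι → ℝ) :
    IsUnitaryAverage 0 (diagonal fun i => (b (Equiv.swap j k i) : ℂ))
      (diagonal fun i => (b i : ℂ)) := by
  have h := IsUnitaryAverage.conj (B := diagonal fun i => (b i : ℂ))
    (U := (Equiv.swap j k).permMatrix ℂ) (by
      rw [mem_unitaryGroup_iff, star_eq_conjTranspose, conjTranspose_permMatrix_swap,
        permMatrix_swap_mul_self])
  rw [conjTranspose_permMatrix_swap, permMatrix_swap_mul_diagonal_mul] at h
  exact h

theorem isUnitaryAverage_diagonal_transfer (j k : ι) (b : ι → ℝ) {t : ℝ} (h0 : 0 ≤ t)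
    (h1 : t ≤ 1) :
    IsUnitaryAverage 1
      (diagonal fun i => ((t * b i + (1 - t) * b (Equiv.swap j k i) : ℝ) : ℂ))
      (diagonal fun i => (b i : ℂ)) := by
  have h := IsUnitaryAverage.smul_add_smul_conj (B := diagonal fun i => (b i : ℂ))
    (conjTranspose_permMatrix_swap j k) (permMatrix_swap_mul_self j k)
    (c := √t) (s := √(1 - t)) (by rw [Real.sq_sqrt h0, Real.sq_sqrt (by linarith)]; ring)
  rw [permMatrix_swap_mul_diagonal_mul, Real.sq_sqrt h0, Real.sq_sqrt (by linarith),
    ← diagonal_smul, ← diagonal_smul, diagonal_add] at h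
  simpa only [Complex.ofReal_add, Complex.ofReal_mul, Pi.smul_apply, smul_eq_mul,
    Function.comp_apply] using h

end Diagonal

/-- Majorization of real vectors restricted to the coordinates in `s`, in a form that does not
require sorting the coordinates. -/
def MajorizedOn {ι : Type*} (s : Finset ι) (a b : ι → ℝ) : Prop :=
  ∑ i ∈ s, a i = ∑ i ∈ s, b i ∧ ∀ t : ℝ, ∑ i ∈ s, max (a i - t) 0 ≤ ∑ i ∈ s, max (b i - t) 0

namespace MajorizedOn

variable {ι : Type*} {s : Finset ι} {a b : ι → ℝ}

theorem exists_ge (h : MajorizedOn s a b) {i : ι} (hi : i ∈ s) : ∃ j ∈ s, a i ≤ b j := by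
  obtain ⟨j, hj, hmax⟩ := s.exists_max_image b ⟨i, hi⟩
  refine ⟨j, hj, ?_⟩
  have h0 : ∑ i ∈ s, max (b i - b j) 0 = 0 :=
    Finset.sum_eq_zero fun x hx => max_eq_right (by linarith [hmax x hx])
  have h1 := Finset.single_le_sum (f := fun x => max (a x - b j) 0)
    (fun x _ => le_max_right _ _) hi
  have h2 := h.2 (b j)
  have h3 := le_max_left (a i - b j) 0
  linarith

theorem exists_le (h : MajorizedOn s a b) {i : ι} (hi : i ∈ s) : ∃ k ∈ s, b k ≤ a i := by
  obtain ⟨k, hk, hmin⟩ := s.exists_min_image b ⟨i, hi⟩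
  refine ⟨k, hk, ?_⟩
  have h0 : ∑ i ∈ s, max (b i - b k) 0 = ∑ i ∈ s, (b i - b k) :=
    Finset.sum_congr rfl fun x hx => max_eq_left (by linarith [hmin x hx])
  have h1 := Finset.single_le_sum (f := fun x => max (a x - b k) 0 - (a x - b k))
    (fun x _ => sub_nonneg.2 (le_max_left _ _)) hi
  have h2 := h.2 (b k)
  have h3 := le_max_right (a i - b k) 0
  have h4 := h.1
  simp only [Finset.sum_sub_distrib] at h0 h1
  linarith

variable [DecidableEq ι]

theorem sum_erase_comp_swap {i j : ι} (hi : i ∈ s) (hj : j ∈ s) (f : ι → ℝ) :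
    ∑ x ∈ s.erase i, f (Equiv.swap i j x) = ∑ x ∈ s.erase j, f x := by
  refine Finset.sum_equiv (Equiv.swap i j) (fun x => ?_) fun x _ => rfl
  simp only [Finset.mem_erase, Equiv.swap_apply_def]
  split_ifs <;> grind

/-- A coordinate that already occurs in `b` can be split off. -/
theorem erase_of_eq (h : MajorizedOn s a b) {i j : ι} (hi : i ∈ s) (hj : j ∈ s)
    (hij : b j = a i) : MajorizedOn (s.erase i) a (fun x => b (Equiv.swap i j x)) := by
  refine ⟨?_, fun t => ?_⟩
  · rw [sum_erase_comp_swap hi hj b]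
    have h1 := Finset.add_sum_erase s a hi
    have h2 := Finset.add_sum_erase s b hj
    linarith [h.1]
  · rw [sum_erase_comp_swap hi hj fun x => max (b x - t) 0]
    have h1 := Finset.add_sum_erase s (fun x => max (a x - t) 0) hi
    have h2 := Finset.add_sum_erase s (fun x => max (b x - t) 0) hj
    simp only [hij] at h1 h2
    linarith [h.2 t]

theorem sum_erase_max_le (h : MajorizedOn s a b) {i j k : ι} (hi : i ∈ s) (hj : j ∈ s)
    (hk : k ∈ s) (haj : a i < b j) (hak : b k < a i)
    (hgap : ∀ x ∈ s, b x ≤ b k ∨ b j ≤ b x) (t : ℝ) :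
    ∑ x ∈ s.erase i, max (a x - t) 0 ≤
      ∑ x ∈ (s.erase j).erase k, max (b x - t) 0 + max (b j + b k - a i - t) 0 := by
  have hkj : k ∈ s.erase j := Finset.mem_erase.2 ⟨by rintro rfl; linarith, hk⟩
  have H (u : ℝ) : max (a i - u) 0 + ∑ x ∈ s.erase i, max (a x - u) 0 ≤
      max (b j - u) 0 + (max (b k - u) 0 + ∑ x ∈ (s.erase j).erase k, max (b x - u) 0) := by
    have h1 := Finset.add_sum_erase s (fun x => max (a x - u) 0) hi
    have h2 := Finset.add_sum_erase s (fun x => max (b x - u) 0) hj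
    have h3 := Finset.add_sum_erase (s.erase j) (fun x => max (b x - u) 0) hkj
    rw [h1, h3, h2]
    exact h.2 u
  rcases le_total t (b k) with htk | htk
  · have := H t
    rw [max_eq_left (by linarith), max_eq_left (a := b j - t) (by linarith),
      max_eq_left (a := b k - t) (by linarith)] at this
    rw [max_eq_left (a := b j + b k - a i - t) (by linarith)]
    linarith
  rcases le_total (b j) t with htj | htj
  · have := H t
    rw [max_eq_right (by linarith), max_eq_right (a := b j - t) (by linarith),
      max_eq_right (a := b k - t) (by linarith)] at this
    rw [max_eq_right (a := b j + b k - a i - t) (by linarith)]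
    linarith
  set r := (s.erase j).erase k
  have hB (u : ℝ) (hu1 : b k ≤ u) (hu2 : u ≤ b j) : ∑ x ∈ r, max (b x - u) 0 =
      ∑ x ∈ r with b j ≤ b x, b x - (r.filter (b j ≤ b ·)).card * u := by
    rw [← nsmul_eq_mul, ← Finset.sum_const, ← Finset.sum_sub_distrib, Finset.sum_filter]
    refine Finset.sum_congr rfl fun x hx => ?_
    split_ifs with hx'
    · exact max_eq_left (by linarith)
    · refine max_eq_right ?_
      rcases hgap x (Finset.mem_of_mem_erase (Finset.mem_of_mem_erase hx)) with h' | h'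
      · linarith
      · exact absurd h' hx'
  have hA : ∑ x ∈ s.erase i, max (a x - t) 0 =
      ∑ x ∈ s.erase i with t < a x, a x - ((s.erase i).filter (t < a ·)).card * t := by
    rw [← nsmul_eq_mul, ← Finset.sum_const, ← Finset.sum_sub_distrib, Finset.sum_filter]
    refine Finset.sum_congr rfl fun x hx => ?_
    split_ifs with hx'
    · exact max_eq_left (by linarith)
    · exact max_eq_right (by linarith)
  have hA' (u : ℝ) : ∑ x ∈ s.erase i with t < a x, a x -
      ((s.erase i).filter (t < a ·)).card * u ≤ ∑ x ∈ s.erase i, max (a x - u) 0 := by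
    rw [← nsmul_eq_mul, ← Finset.sum_const, ← Finset.sum_sub_distrib, Finset.sum_filter]
    refine Finset.sum_le_sum fun x hx => ?_
    split_ifs with hx'
    · exact le_max_left _ _
    · exact le_max_right _ _
  rw [hA, hB t htk htj]
  rcases le_or_gt ((s.erase i).filter (t < a ·)).card (r.filter (b j ≤ b ·)).card with hm | hm
  · have h1 := H (b j)
    rw [hB (b j) (by linarith) le_rfl, max_eq_right (by linarith),
      max_eq_right (a := b j - b j) (by linarith),
      max_eq_right (a := b k - b j) (by linarith)] at h1
    have h2 := hA' (b j)
    have hm' := (Nat.cast_le (α := ℝ)).2 hm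
    have h3 := mul_le_mul_of_nonneg_right hm' (sub_nonneg.2 htj)
    have h4 := le_max_right (b j + b k - a i - t) 0
    linarith
  · have h1 := H (b k)
    rw [hB (b k) le_rfl (by linarith), max_eq_left (by linarith),
      max_eq_left (a := b j - b k) (by linarith),
      max_eq_left (a := b k - b k) (by linarith)] at h1
    have h2 := hA' (b k)
    have hm' := (Nat.cast_le (α := ℝ)).2 (Nat.succ_le_of_lt hm)
    push_cast at hm'
    have h3 := mul_le_mul_of_nonneg_right hm' (sub_nonneg.2 htk)
    have h4 := le_max_left (b j + b k - a i - t) 0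
    linarith

/-- One transfer between two values of `b` adjacent to `a i` makes the coordinate `i` split off. -/
theorem exists_transfer (h : MajorizedOn s a b) {i : ι} (hi : i ∈ s)
    (hne : ∀ x ∈ s, b x ≠ a i) :
    ∃ j ∈ s, ∃ k ∈ s, ∃ t : ℝ, 0 ≤ t ∧ t ≤ 1 ∧ t * b j + (1 - t) * b k = a i ∧
      MajorizedOn (s.erase i) a fun x =>
        (fun y => t * b y + (1 - t) * b (Equiv.swap j k y)) (Equiv.swap i j x) := by
  obtain ⟨j, hj, hjmin⟩ := (s.filter (a i ≤ b ·)).exists_min_image b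
    (by obtain ⟨j, hj, hij⟩ := h.exists_ge hi; exact ⟨j, Finset.mem_filter.2 ⟨hj, hij⟩⟩)
  obtain ⟨k, hk, hkmax⟩ := (s.filter (b · ≤ a i)).exists_max_image b
    (by obtain ⟨k, hk, hik⟩ := h.exists_le hi; exact ⟨k, Finset.mem_filter.2 ⟨hk, hik⟩⟩)
  rw [Finset.mem_filter] at hj hk
  have haj : a i < b j := lt_of_le_of_ne hj.2 (hne j hj.1).symm
  have hak : b k < a i := lt_of_le_of_ne hk.2 (hne k hk.1)
  have hgap : ∀ x ∈ s, b x ≤ b k ∨ b j ≤ b x := fun x hx => by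
    rcases le_total (b x) (a i) with hx' | hx'
    · exact Or.inl (hkmax x (Finset.mem_filter.2 ⟨hx, hx'⟩))
    · exact Or.inr (hjmin x (Finset.mem_filter.2 ⟨hx, hx'⟩))
  have hkj : k ≠ j := by rintro rfl; linarith
  have hpos : 0 < b j - b k := by linarith
  obtain ⟨t, ht⟩ : ∃ t, t = (a i - b k) / (b j - b k) := ⟨_, rfl⟩
  have htmul : t * (b j - b k) = a i - b k := by rw [ht]; field_simp
  have hsum (g : ℝ → ℝ) : ∑ x ∈ s.erase i, g ((fun y => t * b y + (1 - t) * b (Equiv.swap j k y))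
      (Equiv.swap i j x)) = ∑ x ∈ (s.erase j).erase k, g (b x) + g (b j + b k - a i) := by
    rw [sum_erase_comp_swap hi hj.1 fun x => g (t * b x + (1 - t) * b (Equiv.swap j k x)),
      ← Finset.sum_erase_add _ _ (Finset.mem_erase.2 ⟨hkj, hk.1⟩), Equiv.swap_apply_right]
    congr 1
    · refine Finset.sum_congr rfl fun x hx => ?_
      simp only [Finset.mem_erase] at hx
      rw [Equiv.swap_apply_of_ne_of_ne hx.2.1 hx.1]
      ring_nf
    · congr 1
      linarith
  refine ⟨j, hj.1, k, hk.1, t, ?_, ?_, by linarith, ?_, fun u => ?_⟩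
  · rw [ht]; exact div_nonneg (by linarith) hpos.le
  · rw [ht]; exact (div_le_one hpos).2 (by linarith)
  · have h1 := Finset.add_sum_erase s a hi
    have h2 := Finset.add_sum_erase s b hj.1
    have h3 := Finset.add_sum_erase (s.erase j) b (Finset.mem_erase.2 ⟨hkj, hk.1⟩)
    have h4 := hsum id
    simp only [id] at h4
    rw [h4]
    linarith [h.1]
  · rw [hsum fun y => max (y - u) 0]
    exact h.sum_erase_max_le hi hj.1 hk.1 haj hak hgap u

theorem isUnitaryAverage_diagonal [Fintype ι] (m : ℕ) (hs : s.card ≤ m + 1)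
    (h : MajorizedOn s a b) (hab : ∀ x ∉ s, a x = b x) :
    IsUnitaryAverage m (diagonal fun x => (a x : ℂ)) (diagonal fun x => (b x : ℂ)) := by
  induction m generalizing s b with
  | zero =>
    have : a = b := by
      funext x
      by_cases hx : x ∈ s
      · obtain rfl : s = {x} :=
          Finset.eq_singleton_iff_unique_mem.2 ⟨hx, fun y hy => Finset.card_le_one.1 hs y hy x hx⟩
        simpa using h.1
      · exact hab x hx
    subst this
    simpa using IsUnitaryAverage.conj (B := diagonal fun x => (a x : ℂ))
        (one_mem (unitaryGroup ι ℂ))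
  | succ m ih =>
    rcases s.eq_empty_or_nonempty with rfl | ⟨i, hi⟩
    · exact (ih (by simp) h hab).trans (IsUnitaryAverage.refl_one _)
    have hcard : (s.erase i).card ≤ m + 1 := by
      rw [Finset.card_erase_of_mem hi]; omega
    by_cases hex : ∃ j ∈ s, b j = a i
    · obtain ⟨j, hj, hji⟩ := hex
      refine ((ih hcard (h.erase_of_eq hi hj hji) fun x hx => ?_).trans
        (isUnitaryAverage_diagonal_swap i j b)).trans (IsUnitaryAverage.refl_one _)
      by_cases hxi : x = i
      · rw [hxi, Equiv.swap_apply_left, hji]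
      · have hxs : x ∉ s := fun hxs => hx (Finset.mem_erase.2 ⟨hxi, hxs⟩)
        rw [Equiv.swap_apply_of_ne_of_ne hxi (by rintro rfl; exact hxs hj), hab x hxs]
    · push Not at hex
      obtain ⟨j, hj, k, hk, t, ht0, ht1, htj, ht⟩ := h.exists_transfer hi hex
      refine ((ih hcard ht fun x hx => ?_).trans (isUnitaryAverage_diagonal_swap i j
        fun y => t * b y + (1 - t) * b (Equiv.swap j k y))).trans
        (isUnitaryAverage_diagonal_transfer j k b ht0 ht1)
      by_cases hxi : x = i
      · rw [hxi, Equiv.swap_apply_left]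
        beta_reduce
        rw [Equiv.swap_apply_left, htj]
      · have hxs : x ∉ s := fun hxs => hx (Finset.mem_erase.2 ⟨hxi, hxs⟩)
        rw [Equiv.swap_apply_of_ne_of_ne hxi (by rintro rfl; exact hxs hj)]
        beta_reduce
        rw [Equiv.swap_apply_of_ne_of_ne (by rintro rfl; exact hxs hj)
            (by rintro rfl; exact hxs hk), hab x hxs]
        ring

end MajorizedOn

theorem IsDoublyStochastic.majorizedOn {n : ℕ} {X : Matrix (Fin n) (Fin n) ℝ}
    (hX : IsDoublyStochastic X) (b : Fin n → ℝ) : MajorizedOn Finset.univ (X *ᵥ b) b := by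
  obtain ⟨hnonneg, hrow, hcol⟩ := hX
  have hsum (f : Fin n → ℝ) : ∑ i, ∑ j, X i j * f j = ∑ j, f j := by
    rw [Finset.sum_comm]
    simp only [← Finset.sum_mul, hcol, one_mul]
  refine ⟨hsum b, fun t => ?_⟩
  rw [← hsum fun j => max (b j - t) 0]
  refine Finset.sum_le_sum fun i _ => max_le ?_ ?_
  · calc (X *ᵥ b) i - t = ∑ j, X i j * (b j - t) := by
          simp only [mul_sub, Finset.sum_sub_distrib, ← Finset.sum_mul, hrow, one_mul]
          rfl
      _ ≤ _ := Finset.sum_le_sum fun j _ =>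
          mul_le_mul_of_nonneg_left (le_max_left _ _) (hnonneg i j)
  · exact Finset.sum_nonneg fun j _ => mul_nonneg (hnonneg i j) (le_max_right _ _)

theorem stmt_10 (n : ℕ) (A B : Matrix (Fin n) (Fin n) ℂ)
    (hA : Aᴴ = A) (hB : Bᴴ = B)
    (hmaj : ∃ (lA lB : Fin n → ℝ) (UA UB : Matrix (Fin n) (Fin n) ℂ)
        (X : Matrix (Fin n) (Fin n) ℝ),
      UAᴴ * UA = 1 ∧ UA * UAᴴ = 1 ∧ UBᴴ * UB = 1 ∧ UB * UBᴴ = 1 ∧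
      A = UAᴴ * Matrix.diagonal (fun i => (lA i : ℂ)) * UA ∧
      B = UBᴴ * Matrix.diagonal (fun i => (lB i : ℂ)) * UB ∧
      IsDoublyStochastic X ∧ X *ᵥ lB = lA) :
    ∃ U : Fin (2 ^ (n - 1)) → Matrix (Fin n) (Fin n) ℂ,
      (∀ i, (U i)ᴴ * U i = 1 ∧ U i * (U i)ᴴ = 1) ∧
      A = ∑ i, ((1 : ℂ) / 2 ^ (n - 1)) • ((U i)ᴴ * B * U i) := by
  obtain ⟨lA, lB, UA, UB, X, hUA, -, -, hUB, rfl, rfl, hX, rfl⟩ := hmaj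
  have hdiag := (hX.majorizedOn lB).isUnitaryAverage_diagonal (n - 1)
    (by rw [Finset.card_univ, Fintype.card_fin]; omega) (by simp)
  have hconjA := IsUnitaryAverage.conj (B := diagonal fun i => ((X *ᵥ lB) i : ℂ))
    (mem_unitaryGroup_iff'.2 hUA)
  have hconjB := IsUnitaryAverage.conj
    (B := UBᴴ * diagonal (fun i => (lB i : ℂ)) * UB)
    (U := UBᴴ) (mem_unitaryGroup_iff'.2 (by simpa [star_eq_conjTranspose] using hUB))
  have hcancel : UBᴴᴴ * (UBᴴ * diagonal (fun i => (lB i : ℂ)) * UB) * UBᴴ =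
      diagonal fun i => (lB i : ℂ) := by
    rw [conjTranspose_conjTranspose, ← mul_assoc, ← mul_assoc, hUB, one_mul, mul_assoc, hUB,
      mul_one]
  rw [hcancel] at hconjB
  have hmain := hconjA.trans (hdiag.trans hconjB)
  rw [zero_add, add_zero] at hmain
  obtain ⟨U, hU⟩ := hmain
  exact ⟨fun i => U i, fun i => ⟨mem_unitaryGroup_iff'.1 (U i).2, mem_unitaryGroup_iff.1 (U i).2⟩,
    hU⟩
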